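/- Let δ ≥ 2 be an integer and α ∈ U. Let C ≠ 0 be an abelian code in A_q(r_1,…,r_s) with defining set D_α(C), and let M = M(D_α(C)) be the q-orbits hypermatrix afforded by D_α(C). If there exist k ∈ {1,…,s} and a list j_0,…,j_{δ−2} of δ−1 consecutive integers modulo r_k such that H_M(k,j_i) = 0 for all i = 0,…,δ−2, then d*(C) ≥ d_α*(C) ≥ δ. -/

import Mathlib

open Classical

noncomputable section

namespace AbelianCodes

/-- The index set `I = Z_{r 0} × ⋯ × Z_{r (s-1)}`. -/
abbrev Idx {s : ℕ} (r : Fin s → ℕ) : Type := ∀ k, ZMod (r k)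

variable {F : Type*} [Field F]

/-- The support of a hypermatrix. -/
def hsupp {s : ℕ} {r : Fin s → ℕ} (M : Idx r → F) : Set (Idx r) := {i | M i ≠ 0}

/-- The hypercolumn `H_M(k,b)` of a hypermatrix, viewed as an `(s-1)`-dimensional
hypermatrix indexed by `∏_{j ≠ k} Z_{r j}`. -/
def hypercol {s : ℕ} {r : Fin (s+1) → ℕ} (M : Idx r → F) (k : Fin (s+1)) (b : ZMod (r k)) :
    Idx (fun j => r (k.succAbove j)) → F :=
  fun i => M (k.insertNth b i)

/-- `ω_M(k,b)`: the number of consecutive zero hypercolumns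
`H_M(k,b+1), H_M(k,b+2), …` (indices modulo `r k`). -/
def runLen {s : ℕ} {r : Fin (s+1) → ℕ} (M : Idx r → F) (k : Fin (s+1)) (b : ZMod (r k)) : ℕ :=
  ((Finset.Ico 1 (r k)).filter
    (fun j => ∀ m : ℕ, m ∈ Finset.Icc 1 j → hypercol M k (b + (m : ZMod (r k))) = 0)).card

/-- The apparent distance `d*(M)` of a hypermatrix, defined recursively on the
number of variables.  (A `0`-dimensional hypermatrix is a scalar, of apparent
distance `1` if nonzero and `0` otherwise; with this convention the `1`-dimensional
case becomes `max {ω_M(b)+1 : a_b ≠ 0}` and the higher-dimensional case becomes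
`max_k max {(ω_M(k,b)+1)·d*(H_M(k,b)) : H_M(k,b) ≠ 0}`, since zero hypermatrices
have apparent distance `0`.) -/
def apd : {s : ℕ} → (r : Fin s → ℕ) → (Idx r → F) → ℕ
  | 0, _, M => if M finZeroElim = 0 then 0 else 1
  | _+1, r, M =>
      Finset.univ.sup fun k =>
        Finset.univ.sup fun b : Fin (r k) =>
          (runLen M k ((b : ℕ) : ZMod (r k)) + 1) *
            apd (fun j => r (k.succAbove j)) (hypercol M k ((b : ℕ) : ZMod (r k)))

/-- The `q^t`-orbit `Q_t(a)` of `a ∈ I`. -/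
def qOrbit {s : ℕ} (r : Fin s → ℕ) (q t : ℕ) (a : Idx r) : Set (Idx r) :=
  {i | ∃ n : ℕ, ∀ k, i k = (q : ZMod (r k)) ^ (t * n) * a k}

/-- `D` is a union of `q^t`-orbits. -/
def OrbitUnion {s : ℕ} (r : Fin s → ℕ) (q t : ℕ) (D : Set (Idx r)) : Prop :=
  ∀ a ∈ D, qOrbit r q t a ⊆ D

/-- The hypermatrix afforded by `D ⊆ I`: entry `0` at indices in `D`, entry `1` elsewhere. -/
def afforded {s : ℕ} (r : Fin s → ℕ) (D : Set (Idx r)) : Idx r → F :=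
  fun i => if i ∈ D then 0 else 1

/-- `M` is a `q^t`-orbits hypermatrix, i.e. the hypermatrix afforded by some union
of `q^t`-orbits. -/
def IsOrbitMx {s : ℕ} (r : Fin s → ℕ) (q t : ℕ) (M : Idx r → F) : Prop :=
  ∃ D : Set (Idx r), OrbitUnion r q t D ∧ M = afforded r D

/-- The minimum apparent distance `mad(M) = min {d*(P) : P a q^t-orbits hypermatrix,
`0 ≠ P ≤ M`}`, where `P ≤ M` means `supp P ⊆ supp M`. -/
def mad {s : ℕ} (r : Fin s → ℕ) (q t : ℕ) (M : Idx r → F) : ℕ :=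
  sInf {d | ∃ P : Idx r → F, IsOrbitMx r q t P ∧ P ≠ 0 ∧ hsupp P ⊆ hsupp M ∧ apd r P = d}

/-- The `q^t`-cyclotomic coset of `b` modulo `r`. -/
def cycCoset (r q t : ℕ) (b : ZMod r) : Set (ZMod r) :=
  {x | ∃ n : ℕ, x = (q : ZMod r) ^ (t * n) * b}



variable {F : Type*} [Field F] {L : Type*} [Field L] [Algebra F L]

/-- An abelian code: a subspace of the group algebra `F[∏ Z_{r k}]` (identified
with the space of coefficient functions `I → F`) which is closed under all
translations, i.e. an ideal. -/
def IsAbelianCode {s : ℕ} {r : Fin s → ℕ} (C : Submodule F (Idx r → F)) : Prop :=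
  ∀ f ∈ C, ∀ a : Idx r, (fun i => f (i - a)) ∈ C

/-- Convolution: the multiplication of the group algebra in the coefficient
function picture. -/
def conv {s : ℕ} {r : Fin s → ℕ} [∀ k, NeZero (r k)] (f g : Idx r → F) : Idx r → F :=
  fun i => ∑ u : Idx r, f u * g (i - u)

/-- The (discrete) Fourier transform `φ_{α,f}(j) = f(α^j)` of a coefficient
function `f : I → F` with respect to `α`, with values in the extension `L`. -/
def fourier {s : ℕ} {r : Fin s → ℕ} [∀ k, NeZero (r k)] (α : Fin s → L) (f : Idx r → F) :
    Idx r → L :=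
  fun j => ∑ i : Idx r, algebraMap F L (f i) * ∏ k, α k ^ ((i k).val * (j k).val)

/-- The Hamming weight of a codeword. -/
def wt {s : ℕ} {r : Fin s → ℕ} [∀ k, NeZero (r k)] (f : Idx r → F) : ℕ :=
  (Finset.univ.filter fun i : Idx r => f i ≠ 0).card

/-- The minimum distance of a code. -/
def dmin {s : ℕ} {r : Fin s → ℕ} [∀ k, NeZero (r k)] (C : Submodule F (Idx r → F)) : ℕ :=
  sInf {w | ∃ f ∈ C, f ≠ (0 : Idx r → F) ∧ wt f = w}

/-- The defining set `D_α(C) = {a ∈ I : f(α^a) = 0 for all f ∈ C}`. -/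
def defSet {s : ℕ} (r : Fin s → ℕ) [∀ k, NeZero (r k)] (α : Fin s → L)
    (C : Submodule F (Idx r → F)) : Set (Idx r) :=
  {a | ∀ f ∈ C, fourier α f a = 0}

/-- The apparent distance of a code `C` with respect to `α`:
`d_α*(C) = min {d*(M(φ_{α,e})) : 0 ≠ e = e² ∈ C}`. -/
def dStarAlpha {s : ℕ} (r : Fin s → ℕ) [∀ k, NeZero (r k)] (α : Fin s → L)
    (C : Submodule F (Idx r → F)) : ℕ :=
  sInf {d | ∃ e, e ∈ C ∧ e ≠ (0 : Idx r → F) ∧ conv e e = e ∧ apd r (fourier α e) = d}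

/-- The apparent distance of a code: `d*(C) = max {d_β*(C) : β ∈ U}`, where `U`
is the set of tuples of primitive roots of unity in `L`. -/
def dStarCode {s : ℕ} (r : Fin s → ℕ) [∀ k, NeZero (r k)] (L : Type*) [Field L] [Algebra F L]
    (C : Submodule F (Idx r → F)) : ℕ :=
  sSup {d | ∃ α : Fin s → L, (∀ k, IsPrimitiveRoot (α k) (r k)) ∧ dStarAlpha r α C = d}

/-- The defining set of the multivariate BCH code `B_q(α,γ,δ,b)`:
`∪_{k∈γ} ∪_{l=0}^{δ_k−2} ∪_{i ∈ I(k, b_k+l)} Q(i)`. -/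
def bchDefSet {s : ℕ} (r : Fin s → ℕ) (q : ℕ) (γ : Finset (Fin s)) (δ b : Fin s → ℕ) :
    Set (Idx r) :=
  ⋃ k ∈ γ, ⋃ l ∈ Finset.range (δ k - 1),
    ⋃ i ∈ {i : Idx r | i k = ((b k + l : ℕ) : ZMod (r k))}, qOrbit r q 1 i

/-!
Stepping backwards from a run of `n` zero hypercolumns of a nonzero hypermatrix, one reaches a
nonzero hypercolumn followed by at least `n` zero ones, so the apparent distance is at least
`n + 1`. The Fourier transform of a codeword vanishes on the defining set, and it is nonzero for a
nonzero codeword because distinct characters are linearly independent, so the bound applies to every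
nonzero idempotent of the code. The minimum defining `d_α*(C)` ranges over a nonempty set: for nonzero
`f` in `C`, the descending chain of ideals `(fⁿ)` stabilizes, and `f ^ n * f = y * f ^ (n + 2)` says
that `y * f` transforms to the indicator of the support of the transform of `f`.
-/

section ApparentDistance

variable {s : ℕ} {r : Fin (s + 1) → ℕ} {M : Idx r → F} {k : Fin (s + 1)}

lemma hypercol_eq_zero_iff {b : ZMod (r k)} :
    hypercol M k b = 0 ↔ ∀ i : Idx r, i k = b → M i = 0 := by
  constructor
  · rintro h i rfl
    simpa only [hypercol, Fin.insertNth_self_removeNth, Pi.zero_apply]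
      using congrFun h (k.removeNth i)
  · intro h
    funext i
    exact h (k.insertNth b i) (Fin.insertNth_apply_same (α := fun k => ZMod (r k)) k b i)

lemma hypercol_afforded_eq_zero_iff {D : Set (Idx r)} {b : ZMod (r k)} :
    hypercol (afforded r D : Idx r → F) k b = 0 ↔ ∀ i : Idx r, i k = b → i ∈ D := by
  simp only [hypercol_eq_zero_iff, afforded, ite_eq_left_iff, one_ne_zero, imp_false, not_not]

lemma exists_hypercol_ne_zero (hM : M ≠ 0) (k : Fin (s + 1)) : ∃ b, hypercol M k b ≠ 0 := by
  obtain ⟨i, hi⟩ := Function.ne_iff.1 hM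
  exact ⟨i k, fun h => hi (hypercol_eq_zero_iff.1 h i rfl)⟩

lemma le_runLen {b : ZMod (r k)} {n : ℕ} (hn : n < r k)
    (hrun : ∀ m ∈ Finset.Icc 1 n, hypercol M k (b + (m : ZMod (r k))) = 0) :
    n ≤ runLen M k b := by
  calc n = (Finset.Icc 1 n).card := by simp only [Nat.card_Icc, Nat.add_sub_cancel]
    _ ≤ runLen M k b := Finset.card_le_card fun j hj => by
      simp only [Finset.mem_Icc, Finset.mem_filter, Finset.mem_Ico] at hrun hj ⊢
      exact ⟨by omega, fun m hm => hrun m (by omega)⟩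

variable [∀ k, NeZero (r k)]

lemma runLen_succ_mul_apd_hypercol_le_apd (M : Idx r → F) (k : Fin (s + 1)) (b : ZMod (r k)) :
    (runLen M k b + 1) * apd (fun j => r (k.succAbove j)) (hypercol M k b) ≤ apd r M := by
  rw [apd]
  refine Finset.le_sup_of_le (Finset.mem_univ k)
    (Finset.le_sup_of_le (Finset.mem_univ ⟨b.val, b.val_lt⟩) ?_)
  rw [ZMod.natCast_zmod_val]

lemma apd_pos : ∀ {s : ℕ} {r : Fin s → ℕ} [∀ k, NeZero (r k)] {M : Idx r → F},
    M ≠ 0 → 0 < apd r M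
  | 0, _, _, M, hM => by
    have hM₀ : M finZeroElim ≠ 0 := fun h =>
      hM (funext fun i => by rw [Subsingleton.elim i finZeroElim, h, Pi.zero_apply])
    simp only [apd, hM₀, if_false, zero_lt_one]
  | _ + 1, _, _, M, hM => by
    obtain ⟨b, hb⟩ := exists_hypercol_ne_zero hM 0
    exact (Nat.mul_pos (Nat.succ_pos _) (apd_pos hb)).trans_le
      (runLen_succ_mul_apd_hypercol_le_apd M 0 b)

lemma exists_hypercol_ne_zero_and_le_runLen (hM : M ≠ 0) {j₀ : ZMod (r k)} {n : ℕ}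
    (hzero : ∀ i < n, hypercol M k (j₀ + (i : ZMod (r k))) = 0) :
    ∃ b, hypercol M k b ≠ 0 ∧ n ≤ runLen M k b := by
  obtain ⟨c, hc⟩ := exists_hypercol_ne_zero hM k
  have hn : n < r k := by
    by_contra! hle
    have := hzero (c - j₀).val ((c - j₀).val_lt.trans_le hle)
    rw [ZMod.natCast_zmod_val, add_sub_cancel] at this
    exact hc this
  have hback : ∃ t : ℕ, hypercol M k (j₀ - 1 - (t : ZMod (r k))) ≠ 0 :=
    ⟨(j₀ - 1 - c).val, by rwa [ZMod.natCast_zmod_val, sub_sub_cancel]⟩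
  refine ⟨_, Nat.find_spec hback, le_runLen hn fun m hm => ?_⟩
  have hbetween : ∀ u < Nat.find hback, hypercol M k (j₀ - 1 - (u : ZMod (r k))) = 0 :=
    fun u hu => not_not.1 (Nat.find_min hback hu)
  generalize Nat.find hback = t at hbetween ⊢
  obtain ⟨hm₁, hmn⟩ := Finset.mem_Icc.1 hm
  rcases le_or_gt m t with hmt | htm
  · obtain ⟨u, rfl⟩ := Nat.exists_eq_add_of_le hmt
    convert hbetween u (by omega) using 2
    push_cast
    ring
  · obtain ⟨u, rfl⟩ := Nat.exists_eq_add_of_lt htm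
    convert hzero u (by omega) using 2
    push_cast
    ring

lemma succ_le_apd_of_hypercol_eq_zero (hM : M ≠ 0) {j₀ : ZMod (r k)} {n : ℕ}
    (hzero : ∀ i < n, hypercol M k (j₀ + (i : ZMod (r k))) = 0) : n + 1 ≤ apd r M := by
  obtain ⟨b, hb, hrun⟩ := exists_hypercol_ne_zero_and_le_runLen hM hzero
  calc n + 1 ≤ runLen M k b + 1 := Nat.succ_le_succ hrun
    _ ≤ (runLen M k b + 1) * apd _ (hypercol M k b) := Nat.le_mul_of_pos_right _ (apd_pos hb)
    _ ≤ apd r M := runLen_succ_mul_apd_hypercol_le_apd M k b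

end ApparentDistance

section RootChar

variable {s : ℕ} {r : Fin s → ℕ} [∀ k, NeZero (r k)] {R : Type*} [CommMonoid R] {α : Fin s → R}

/-- The character `j ↦ ∏ k, α k ^ (i k * j k)` of `∏ k, Z_{r k}` attached to the index `i` and to a
tuple `α` of roots of unity; over a field, `fourier α f` is the combination of these characters
with coefficients `f i`. -/
def rootChar (hα : ∀ k, α k ^ r k = 1) (i : Idx r) : AddChar (Idx r) R :=
  ∏ k, ((AddChar.zmodChar (r k) (hα k)).mulShift (i k)).compAddMonoidHom (Pi.evalAddMonoidHom _ k)

lemma rootChar_apply (hα : ∀ k, α k ^ r k = 1) (i j : Idx r) :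
    rootChar hα i j = ∏ k, α k ^ ((i k).val * (j k).val) := by
  rw [rootChar, AddChar.prod_apply]
  refine Finset.prod_congr rfl fun k _ => ?_
  calc AddChar.zmodChar (r k) (hα k) (i k * j k)
      = AddChar.zmodChar (r k) (hα k) (((i k).val * (j k).val : ℕ) : ZMod (r k)) := by
        rw [Nat.cast_mul, ZMod.natCast_zmod_val, ZMod.natCast_zmod_val]
    _ = α k ^ ((i k).val * (j k).val) := AddChar.zmodChar_apply' (hα k) _

lemma rootChar_comm (hα : ∀ k, α k ^ r k = 1) (i j : Idx r) :
    rootChar hα i j = rootChar hα j i := by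
  simp only [rootChar_apply, mul_comm]

lemma rootChar_single_one (hα : ∀ k, α k ^ r k = 1) (i : Idx r) (k : Fin s) :
    rootChar hα (Pi.single k 1) i = α k ^ (i k).val := by
  rw [rootChar, AddChar.prod_apply, Finset.prod_eq_single k]
  · simp [AddChar.zmodChar_apply]
  · intro l _ hl
    simp [hl]
  · simp

lemma rootChar_injective (hα : ∀ k, IsPrimitiveRoot (α k) (r k)) :
    Function.Injective (rootChar (r := r) fun k => (hα k).pow_eq_one) := by
  intro i j hij
  funext k
  have hpow : α k ^ (i k).val = α k ^ (j k).val := by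
    rw [← rootChar_single_one (fun k => (hα k).pow_eq_one) i k,
      ← rootChar_single_one (fun k => (hα k).pow_eq_one) j k, rootChar_comm, hij, rootChar_comm]
  exact ZMod.val_injective _ ((hα k).pow_inj (i k).val_lt (j k).val_lt hpow)

end RootChar

section Fourier

variable {s : ℕ} {r : Fin s → ℕ} [∀ k, NeZero (r k)] {α : Fin s → L}

lemma linearIndependent_addChar (A R : Type*) [AddMonoid A] [CommRing R] [IsDomain R] :
    LinearIndependent R (fun χ : AddChar A R => (χ : A → R)) :=
  (linearIndependent_monoidHom (Multiplicative A) R).comp _ AddChar.toMonoidHomEquiv.injective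

lemma fourier_apply_eq_sum_rootChar (hα : ∀ k, α k ^ r k = 1) (f : Idx r → F) (j : Idx r) :
    fourier α f j = ∑ i, algebraMap F L (f i) * rootChar hα i j := by
  simp only [fourier, rootChar_apply]

lemma fourier_eq_linearCombination (hα : ∀ k, α k ^ r k = 1) (f : Idx r → F) :
    fourier α f =
      Fintype.linearCombination L (fun i => (rootChar hα i : Idx r → L)) (algebraMap F L ∘ f) := by
  funext j
  simp only [fourier_apply_eq_sum_rootChar hα, Fintype.linearCombination_apply, Finset.sum_apply,
    Pi.smul_apply, Function.comp_apply, smul_eq_mul]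

lemma fourier_injective (hα : ∀ k, IsPrimitiveRoot (α k) (r k)) :
    Function.Injective (fourier α : (Idx r → F) → Idx r → L) := by
  have hlin := (linearIndependent_addChar (Idx r) L).comp _ (rootChar_injective hα)
  intro f g hfg
  rw [fourier_eq_linearCombination fun k => (hα k).pow_eq_one,
    fourier_eq_linearCombination fun k => (hα k).pow_eq_one] at hfg
  exact (algebraMap F L).injective.comp_left
    (linearIndependent_iff_injective_fintypeLinearCombination.1 hlin hfg)

lemma fourier_zero (α : Fin s → L) : fourier α (0 : Idx r → F) = 0 := by
  funext j
  simp only [fourier, Pi.zero_apply, map_zero, zero_mul, Finset.sum_const_zero]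

lemma fourier_ne_zero (hα : ∀ k, IsPrimitiveRoot (α k) (r k)) {f : Idx r → F} (hf : f ≠ 0) :
    fourier α f ≠ 0 := by
  rw [← fourier_zero (F := F) α]
  exact (fourier_injective hα).ne hf

lemma fourier_conv (hα : ∀ k, α k ^ r k = 1) (f g : Idx r → F) :
    fourier α (conv f g) = fourier α f * fourier α g := by
  funext j
  simp only [Pi.mul_apply, fourier_apply_eq_sum_rootChar hα, conv, map_sum, map_mul, Finset.sum_mul]
  rw [Finset.sum_comm]
  refine Finset.sum_congr rfl fun u _ => ?_
  rw [Finset.mul_sum, ← Equiv.sum_comp (Equiv.addRight u)]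
  refine Finset.sum_congr rfl fun v _ => ?_
  have hchar : rootChar hα (v + u) j = rootChar hα v j * rootChar hα u j := by
    simp only [rootChar_comm hα _ j, AddChar.map_add_eq_mul]
  rw [Equiv.coe_addRight, add_sub_cancel_right, hchar]
  ring

end Fourier

section Idempotent

variable {s : ℕ} {r : Fin s → ℕ} [∀ k, NeZero (r k)] {α : Fin s → L}

lemma conv_eq_sum_smul (f g : Idx r → F) : conv f g = ∑ u, f u • fun i => g (i - u) := by
  funext i
  simp only [conv, Finset.sum_apply, Pi.smul_apply, smul_eq_mul]

lemma IsAbelianCode.conv_mem {C : Submodule F (Idx r → F)} (hC : IsAbelianCode C) {g : Idx r → F}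
    (hg : g ∈ C) (f : Idx r → F) : conv f g ∈ C := by
  rw [conv_eq_sum_smul]
  exact C.sum_mem fun u _ => C.smul_mem _ (hC g hg u)

/-- Multiplication by `g` in the group algebra, as an endomorphism of the space of coefficient
functions; the ranges of its powers are the ideals `(gⁿ)`. -/
def convRight (g : Idx r → F) : Module.End F (Idx r → F) :=
  Fintype.linearCombination F fun u i => g (i - u)

lemma convRight_apply (f g : Idx r → F) : convRight g f = conv f g :=
  (conv_eq_sum_smul f g).symm

lemma fourier_convRight_pow (hα : ∀ k, α k ^ r k = 1) (g f : Idx r → F) (n : ℕ) :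
    fourier α ((convRight g ^ n) f) = fourier α f * fourier α g ^ n := by
  induction n with
  | zero => rw [pow_zero, pow_zero, mul_one, Module.End.one_apply]
  | succ n ih =>
    rw [pow_succ', Module.End.mul_apply, convRight_apply, fourier_conv hα, ih, pow_succ, mul_assoc]

lemma exists_pow_apply_eq_pow_add_apply {R V : Type*} [Semiring R] [AddCommMonoid V] [Module R V]
    [IsArtinian R V] (T : Module.End R V) (x : V) (m : ℕ) :
    ∃ n y, (T ^ n) x = (T ^ (n + m)) y := by
  obtain ⟨n, hn⟩ := IsArtinian.monotone_stabilizes T.iterateRange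
  have hrange : LinearMap.range (T ^ n) = LinearMap.range (T ^ (n + m)) := hn _ le_self_add
  obtain ⟨y, hy⟩ := hrange ▸ LinearMap.mem_range_self (T ^ n) x
  exact ⟨n, y, hy.symm⟩

lemma exists_fourier_conv_eq_indicator (hα : ∀ k, α k ^ r k = 1) (f : Idx r → F) :
    ∃ y : Idx r → F, fourier α (conv y f) = (Function.support (fourier α f)).indicator 1 := by
  obtain ⟨n, y, hy⟩ := exists_pow_apply_eq_pow_add_apply (convRight f) f 2
  refine ⟨y, funext fun j => ?_⟩
  have hj := congrFun (congrArg (fourier α) hy) j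
  simp only [fourier_convRight_pow hα, Pi.mul_apply, Pi.pow_apply] at hj
  rw [fourier_conv hα, Pi.mul_apply]
  by_cases hf : fourier α f j = 0
  · rw [hf, mul_zero, Set.indicator_of_notMem (by simpa using hf)]
  · rw [Set.indicator_of_mem hf, Pi.one_apply]
    refine mul_right_cancel₀ (pow_ne_zero (n + 1) hf) ?_
    linear_combination -hj

lemma IsAbelianCode.exists_idempotent_ne_zero (hα : ∀ k, IsPrimitiveRoot (α k) (r k))
    {C : Submodule F (Idx r → F)} (hC : IsAbelianCode C) (hC0 : C ≠ ⊥) :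
    ∃ e ∈ C, e ≠ 0 ∧ conv e e = e := by
  obtain ⟨f, hfC, hf⟩ := C.ne_bot_iff.1 hC0
  have hα' : ∀ k, α k ^ r k = 1 := fun k => (hα k).pow_eq_one
  obtain ⟨y, hy⟩ := exists_fourier_conv_eq_indicator hα' f
  refine ⟨conv y f, hC.conv_mem hfC y, fun h0 => ?_, fourier_injective hα ?_⟩
  · rw [h0, fourier_zero, eq_comm, Set.indicator_eq_zero', Function.support_one,
      Set.univ_disjoint, Function.support_eq_empty_iff] at hy
    exact fourier_ne_zero hα hf hy
  · rw [fourier_conv hα', hy, ← Set.inter_indicator_one, Set.inter_self]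

end Idempotent

section Codes

variable {s : ℕ} {r : Fin s → ℕ} [∀ k, NeZero (r k)] {α : Fin s → L}

lemma finite_setOf_isPrimitiveRoot :
    {β : Fin s → L | ∀ k, IsPrimitiveRoot (β k) (r k)}.Finite := by
  refine (Set.Finite.pi' fun k => (primitiveRoots (r k) L).finite_toSet).subset fun β hβ k => ?_
  exact (mem_primitiveRoots (NeZero.pos (r k))).2 (hβ k)

lemma dStarAlpha_le_dStarCode (hα : ∀ k, IsPrimitiveRoot (α k) (r k))
    (C : Submodule F (Idx r → F)) : dStarAlpha r α C ≤ dStarCode r L C :=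
  le_csSup (finite_setOf_isPrimitiveRoot.image fun β => dStarAlpha r β C).bddAbove ⟨α, hα, rfl⟩

lemma IsAbelianCode.le_dStarAlpha (hα : ∀ k, IsPrimitiveRoot (α k) (r k))
    {C : Submodule F (Idx r → F)} (hC : IsAbelianCode C) (hC0 : C ≠ ⊥) {d : ℕ}
    (hd : ∀ e ∈ C, e ≠ 0 → d ≤ apd r (fourier α e)) : d ≤ dStarAlpha r α C := by
  obtain ⟨e, heC, he0, he⟩ := hC.exists_idempotent_ne_zero hα hC0
  refine le_csInf ⟨_, e, heC, he0, he, rfl⟩ ?_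
  rintro _ ⟨e, heC, he0, -, rfl⟩
  exact hd e heC he0

end Codes

theorem bch_bound_one_direction_general {s : ℕ} {r : Fin (s + 1) → ℕ} [∀ k, NeZero (r k)]
    {F : Type*} [Field F] {L : Type*} [Field L] [Algebra F L] {α : Fin (s + 1) → L}
    (hα : ∀ k, IsPrimitiveRoot (α k) (r k)) {C : Submodule F (Idx r → F)} (hC : IsAbelianCode C)
    (hC0 : C ≠ ⊥) {k : Fin (s + 1)} {j₀ : ZMod (r k)} {n : ℕ}
    (hzero : ∀ i < n,
      hypercol (afforded r (defSet r α C) : Idx r → L) k (j₀ + (i : ZMod (r k))) = 0) :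
    n + 1 ≤ dStarAlpha r α C ∧ dStarAlpha r α C ≤ dStarCode r L C := by
  refine ⟨hC.le_dStarAlpha hα hC0 fun e he he0 => ?_, dStarAlpha_le_dStarCode hα C⟩
  have hcol : ∀ i < n, hypercol (fourier α e) k (j₀ + (i : ZMod (r k))) = 0 := fun i hi =>
    hypercol_eq_zero_iff.2 fun a ha => hypercol_afforded_eq_zero_iff.1 (hzero i hi) a ha e he
  exact succ_le_apd_of_hypercol_eq_zero (fourier_ne_zero hα he0) hcol

/-- Let `δ ≥ 2`, `α ∈ U`, and let `C ≠ 0` be an abelian code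
with defining set `D_α(C)` and `M = M(D_α(C))`.  If there are `k` and a list
`j_0,…,j_{δ−2}` of `δ−1` consecutive integers modulo `r_k` with `H_M(k,j_i) = 0`
for all `i`, then `d*(C) ≥ d_α*(C) ≥ δ`. -/
theorem bch_bound_one_direction
    {s : ℕ} (r : Fin (s+1) → ℕ) [∀ k, NeZero (r k)]
    {F : Type*} [Field F] [Fintype F]
    (hcop : ∀ k, (Fintype.card F).Coprime (r k))
    (L : Type*) [Field L] [Algebra F L]
    (δ : ℕ) (hδ : 2 ≤ δ)
    (α : Fin (s+1) → L) (hα : ∀ k, IsPrimitiveRoot (α k) (r k))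
    (C : Submodule F (Idx r → F)) (hC : IsAbelianCode C) (hC0 : C ≠ ⊥)
    (k : Fin (s+1)) (j₀ : ZMod (r k))
    (hzero : ∀ i : ℕ, i ≤ δ - 2 →
      hypercol (afforded r (defSet r α C) : Idx r → L) k (j₀ + (i : ZMod (r k))) = 0) :
    δ ≤ dStarAlpha r α C ∧ dStarAlpha r α C ≤ dStarCode r L C := by
  obtain ⟨n, rfl⟩ := Nat.exists_eq_add_of_le' (Nat.one_le_of_lt hδ)
  exact bch_bound_one_direction_general hα hC hC0 fun i hi => hzero i (by omega)

end AbelianCodes
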